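/- Let A be a commutative ring and let F : ModuleCat A ≌ ModuleCat A be an equivalence of categories whose underlying functor is additive and A-linear. Then the A-module F(A) (the image under F of the monoidal unit) is invertible: there exists an A-module N together with an A-linear isomorphism N ⊗[A] F(A) ≅ A. -/

import Mathlib

open CategoryTheory MonoidalCategory

universe u

/-!
An `A`-linear left adjoint `F ⊣ G` on `A`-modules is tensoring with `F(A)`: there are natural
isomorphisms `G M ≅ Hom(A, G M) ≅ Hom(F(A), M)` of `A`-modules, so `F` and `F(A) ⊗ -` are left
adjoint to the same functor. If moreover `F N ≅ A`, then `F(A) ⊗ N ≅ A`.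
-/

section LinearAdjunction

open Opposite

universe v

/-- The hom-set bijection of an adjunction whose left adjoint is `R`-linear, as an `R`-linear
equivalence. -/
def adjunctionHomLinearEquiv (R : Type*) [Semiring R] {C D : Type*} [Category* C] [Category* D]
    [Preadditive C] [Preadditive D] [Linear R C] [Linear R D] {F : C ⥤ D} {G : D ⥤ C}
    [F.Additive] [F.Linear R] (adj : F ⊣ G) (X : C) (Y : D) :
    (F.obj X ⟶ Y) ≃ₗ[R] (X ⟶ G.obj Y) :=
  LinearEquiv.symm
    { (adj.homAddEquiv X Y).symm with
      map_smul' := fun r f ↦ by simp [Adjunction.homEquiv_counit] }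

/-- The `R`-linear natural isomorphism `Hom(X, G -) ≅ Hom(F X, -)` attached to `F ⊣ G`. The hom
types of `C` and `D` share a universe, so that both sides take values in `ModuleCat.{v} R`. -/
def compLinearCoyonedaIso (R : Type*) [Ring R] {C D : Type*} [Category.{v} C] [Category.{v} D]
    [Preadditive C] [Preadditive D] [Linear R C] [Linear R D] {F : C ⥤ D} {G : D ⥤ C}
    [F.Additive] [F.Linear R] (adj : F ⊣ G) (X : C) :
    G ⋙ (linearCoyoneda R C).obj (op X) ≅ (linearCoyoneda R D).obj (op (F.obj X)) :=
  NatIso.ofComponents (fun Y ↦ (adjunctionHomLinearEquiv R adj X Y).symm.toModuleIso)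
    fun f ↦ by
      ext g
      exact adj.homEquiv_naturality_right_symm g f

end LinearAdjunction

theorem additive_of_isLeftAdjoint {C D : Type*} [Category* C] [Category* D] [Preadditive C]
    [Preadditive D] [Limits.HasBinaryBiproducts C] (F : C ⥤ D) [F.IsLeftAdjoint] :
    F.Additive :=
  have := Limits.preservesBinaryBiproducts_of_preservesBinaryCoproducts F
  F.additive_of_preservesBinaryBiproducts

section EilenbergWatts

variable {A : Type u} [CommRing A] {F G : ModuleCat.{u} A ⥤ ModuleCat.{u} A} [F.Linear A]

/-- The right adjoint of an `A`-linear functor `F` on `A`-modules is the internal hom out of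
`F(A)`. -/
noncomputable def rightAdjointIsoIhom (adj : F ⊣ G) : G ≅ ihom (F.obj (𝟙_ _)) :=
  have := adj.isLeftAdjoint
  have := additive_of_isLeftAdjoint F
  G.rightUnitor.symm ≪≫ G.isoWhiskerLeft MonoidalClosed.unitNatIso ≪≫
    -- `ihom M` unfolds to `(linearCoyoneda A _).obj (op M)`.
    compLinearCoyonedaIso A adj (𝟙_ _)

/-- The Eilenberg–Watts isomorphism `F ≅ F(A) ⊗ -` for an `A`-linear left adjoint `F` on
`A`-modules. -/
noncomputable def leftAdjointIsoTensorLeft (adj : F ⊣ G) : F ≅ tensorLeft (F.obj (𝟙_ _)) :=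
  adj.leftAdjointUniq ((ihom.adjunction _).ofNatIsoRight (rightAdjointIsoIhom adj).symm)

end EilenbergWatts

theorem stmt_1_general {A : Type u} [CommRing A] (F : ModuleCat.{u} A ⥤ ModuleCat.{u} A)
    [F.IsLeftAdjoint] [F.Linear A] (hF : F.essImage (𝟙_ (ModuleCat.{u} A))) :
    ∃ N : ModuleCat.{u} A,
      Nonempty (TensorProduct A N (F.obj (𝟙_ (ModuleCat.{u} A))) ≃ₗ[A] A) := by
  obtain ⟨N, ⟨e⟩⟩ := hF
  have tensorIso : N ⊗ F.obj (𝟙_ _) ≅ 𝟙_ (ModuleCat.{u} A) :=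
    β_ _ _ ≪≫ ((leftAdjointIsoTensorLeft (.ofIsLeftAdjoint F)).app N).symm ≪≫ e
  exact ⟨N, ⟨tensorIso.toLinearEquiv⟩⟩

/-- For a commutative ring `A` and an additive, `A`-linear auto-equivalence `F` of the
category of `A`-modules, the module `F(A)` is invertible: there is an `A`-module `N`
with `N ⊗[A] F(A) ≃ₗ[A] A`. -/
theorem stmt_1 {A : Type u} [CommRing A]
    (F : ModuleCat.{u} A ≌ ModuleCat.{u} A)
    [F.functor.Additive] [F.functor.Linear A] :
    ∃ N : ModuleCat.{u} A,
      Nonempty (TensorProduct A N (F.functor.obj (𝟙_ (ModuleCat.{u} A))) ≃ₗ[A] A) :=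
  stmt_1_general F.functor (Functor.EssSurj.mem_essImage _ _)
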